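/- arXiv:1404.7056 — 2 statements merged into one kernel-verified Lean document; each statement's English description precedes it below -/
import Mathlib

section
/- Suppose that χ_B ∈ X and χ_B has absolutely continuous quasi-norm in X for every bounded set B ⊆ P. Then for every measurable function u : P → ℝ ∪ {±∞} one has ‖u‖_X = inf{‖v‖_X : v ≥ |u| everywhere on P and v is lower semicontinuous on P}. -/
/-!
Only the bound `⨅ v, ‖v‖ ≤ ‖u‖` with `‖u‖ < ∞` needs an argument. By continuity of the quasi-norm
it suffices to find lower semicontinuous `v ≥ |u|` with `‖v - |u|‖` arbitrarily small; this
difference makes sense almost everywhere since a function of finite quasi-norm is finite a.e.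

The functions having such majorants are closed under countable sums, by the Riesz–Fischer property,
and every nonnegative measurable function is a countable sum of multiples `c • χ_A`, so that it is
enough to find open sets `V ⊇ A` with `‖χ_{V \ A}‖` small. If `A` lies in an open set `U` whose
characteristic function has absolutely continuous quasi-norm, outer regularity of the measure gives
open sets between `A` and `U` that decrease to `A` up to a null set, and absolute continuity applies
to their differences with `A`. A general `A` is cut into countably many such pieces, and
the Riesz–Fischer property sums up the errors.
-/

open MeasureTheory Filter Set Topology Metric ENNReal

noncomputable section

/-- A (non-constant, rectifiable) curve in `P`, parametrized by arc length. -/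
structure Curve (P : Type*) [PseudoMetricSpace P] where
  len : ℝ
  len_pos : 0 < len
  toFun : ℝ → P
  lip : LipschitzOnWith 1 toFun (Set.Icc 0 len)

variable {P : Type*}

/-- The curve integral `∫_γ ρ ds`. -/
def curveLint [PseudoMetricSpace P] (γ : Curve P) (ρ : P → ℝ≥0∞) : ℝ≥0∞ :=
  ∫⁻ t in Set.Icc (0 : ℝ) γ.len, ρ (γ.toFun t)

/-- `g` is an upper gradient of `u`. -/
def IsUpperGradient [PseudoMetricSpace P] [MeasurableSpace P]
    (u : P → EReal) (g : P → ℝ≥0∞) : Prop :=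
  Measurable g ∧
    ∀ γ : Curve P, (u (γ.toFun 0) - u (γ.toFun γ.len)).abs ≤ curveLint γ g

/-- A quasi-Banach function lattice over `(P, μ)` with continuous quasi-norm. -/
structure QBFL (P : Type*) [MeasurableSpace P] (μ : MeasureTheory.Measure P) where
  nrm : (P → EReal) → ℝ≥0∞
  cc : ℝ≥0∞
  one_le_cc : 1 ≤ cc
  cc_lt_top : cc < ⊤
  nrm_eq_zero_iff : ∀ u : P → EReal, Measurable u → (nrm u = 0 ↔ u =ᵐ[μ] 0)
  nrm_smul : ∀ (a : ℝ) (u : P → EReal),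
    nrm (fun x => (a : EReal) * u x) = ENNReal.ofReal |a| * nrm u
  nrm_triangle : ∀ u v : P → EReal,
    nrm (fun x => u x + v x) ≤ cc * (nrm u + nrm v)
  nrm_mono : ∀ u v : P → EReal, (∀ᵐ x ∂μ, (u x).abs ≤ (v x).abs) → nrm u ≤ nrm v
  nrm_rieszFischer : ∀ f : ℕ → P → EReal, (∀ n, ∀ᵐ x ∂μ, 0 ≤ f n x) →
    nrm (fun x => ∑' n, f n x) ≤ ∑' n, cc ^ (n + 1) * nrm (f n)
  nrm_continuous : ∀ (f : ℕ → P → EReal) (u : P → EReal),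
    Tendsto (fun n => nrm fun x => f n x - u x) atTop (𝓝 0) →
    Tendsto (fun n => nrm (f n)) atTop (𝓝 (nrm u))

variable [MetricSpace P] [MeasurableSpace P] {μ : MeasureTheory.Measure P}

/-- The quasi-norm applied to a `ℝ≥0∞`-valued function. -/
def QBFL.nrmE (X : QBFL P μ) (g : P → ℝ≥0∞) : ℝ≥0∞ :=
  X.nrm fun x => (g x : EReal)

/-- The Newtonian quasi-seminorm `‖u‖_{N¹X}`. -/
def QBFL.newt (X : QBFL P μ) (u : P → EReal) : ℝ≥0∞ :=
  X.nrm u + ⨅ g ∈ {g : P → ℝ≥0∞ | IsUpperGradient u g}, X.nrmE g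

/-- Membership in the Newtonian space `N¹X`. -/
def QBFL.memN1 (X : QBFL P μ) (u : P → EReal) : Prop :=
  Measurable u ∧ X.newt u < ⊤

/-- The Sobolev capacity `C_X`. -/
def QBFL.cap (X : QBFL P μ) (E : Set P) : ℝ≥0∞ :=
  ⨅ u ∈ {u : P → EReal | X.memN1 u ∧ ∀ x ∈ E, 1 ≤ u x}, X.newt u

theorem abs_coe_ennreal_ereal (a : ℝ≥0∞) : (a : EReal).abs = a := by
  induction a with
  | top => rfl
  | coe r =>
    rw [EReal.coe_nnreal_eq_coe_real, EReal.abs_def, NNReal.abs_eq, ENNReal.ofReal_coe_nnreal]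

theorem coe_abs_ereal_of_nonneg {a : EReal} (ha : 0 ≤ a) : (a.abs : EReal) = a := by
  lift a to ℝ≥0∞ using ha
  rw [abs_coe_ennreal_ereal]

theorem coe_ennreal_ereal_tsum {ι : Type*} (f : ι → ℝ≥0∞) :
    ((∑' i, f i : ℝ≥0∞) : EReal) = ∑' i, (f i : EReal) :=
  Summable.map_tsum ENNReal.summable
    (⟨⟨((↑) : ℝ≥0∞ → EReal), rfl⟩, EReal.coe_ennreal_add⟩ : ℝ≥0∞ →+ EReal)
    continuous_coe_ennreal_ereal

theorem measurable_ereal_abs : Measurable EReal.abs :=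
  EReal.measurable_of_measurable_real <| by
    simp only [EReal.abs_def]
    fun_prop

section OuterRegular

variable {α : Type*} [MeasurableSpace α] {ν : Measure α}

theorem exists_antitone_isOpen_measure_iInter_sdiff_eq_zero [TopologicalSpace α] [ν.OuterRegular]
    {A : Set α} (hA : MeasurableSet A) (hνA : ν A ≠ ⊤) :
    ∃ V : ℕ → Set α, Antitone V ∧ (∀ n, IsOpen (V n)) ∧ (∀ n, A ⊆ V n) ∧
      ν (⋂ n, V n \ A) = 0 := by
  choose W hAW hWo _ hW using fun n : ℕ =>
    hA.exists_isOpen_sdiff_lt hνA (ε := (n : ℝ≥0∞)⁻¹) (by simp)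
  refine ⟨dissipate W, antitone_dissipate,
    fun n => (finite_le_nat n).isOpen_biInter fun k _ => hWo k,
    fun n => subset_iInter₂ fun k _ => hAW k, ?_⟩
  have hle (n : ℕ) : ν (⋂ n, dissipate W n \ A) ≤ (n : ℝ≥0∞)⁻¹ :=
    (measure_mono ((iInter_subset _ n).trans
      (sdiff_subset_sdiff_left (dissipate_subset le_rfl)))).trans (hW n).le
  exact le_antisymm (ge_of_tendsto' ENNReal.tendsto_inv_nat_nhds_zero hle) zero_le

variable [PseudoMetricSpace α]

theorem nonempty_finiteSpanningSetsIn_isOpen_isBounded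
    (hν : ∀ (x : α) (r : ℝ), 0 < r → ν (ball x r) < ⊤) :
    Nonempty (ν.FiniteSpanningSetsIn {U | IsOpen U ∧ Bornology.IsBounded U}) := by
  rcases isEmpty_or_nonempty α with _ | ⟨⟨p⟩⟩
  · exact ⟨fun _ => ∅, by simp, by simp, Subsingleton.elim _ _⟩
  · exact ⟨fun n => ball p (n + 1), fun _ => ⟨isOpen_ball, isBounded_ball⟩,
      fun n => hν p _ n.cast_add_one_pos, iUnion_ball_nat_succ p⟩

theorem outerRegular_of_measure_ball_lt_top [BorelSpace α]
    (hν : ∀ (x : α) (r : ℝ), 0 < r → ν (ball x r) < ⊤) : ν.OuterRegular := by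
  obtain ⟨S⟩ := nonempty_finiteSpanningSetsIn_isOpen_isBounded hν
  refine Measure.FiniteSpanningSetsIn.outerRegular (S.mono' fun U hU => ⟨hU.1.1, ?_⟩)
  have : IsFiniteMeasure (ν.restrict U) := isFiniteMeasure_restrict.2 hU.2.ne
  infer_instance

end OuterRegular

namespace QBFL

variable {α : Type*} [MeasurableSpace α] {ν : Measure α} {X : QBFL α ν}

section Lattice

variable (X)

theorem nrm_le_of_coe_abs_le {u v : α → EReal} (h : ∀ᵐ x ∂ν, ((u x).abs : EReal) ≤ v x) :
    X.nrm u ≤ X.nrm v :=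
  X.nrm_mono u v <| h.mono fun x hx => by
    have hv : 0 ≤ v x := (EReal.coe_ennreal_nonneg _).trans hx
    rwa [← EReal.coe_ennreal_le_coe_ennreal_iff, coe_abs_ereal_of_nonneg hv]

theorem nrmE_abs (u : α → EReal) : X.nrmE (fun x => (u x).abs) = X.nrm u := by
  apply le_antisymm <;>
    exact X.nrm_mono _ _ (.of_forall fun x => by simp only [abs_coe_ennreal_ereal, le_refl])

theorem nrmE_indicator_one (A : Set α) : X.nrmE (A.indicator 1) = X.nrm (A.indicator 1) := by
  refine congrArg X.nrm (funext fun x => ?_)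
  by_cases hx : x ∈ A <;> simp [hx]

theorem nrmE_mono {f g : α → ℝ≥0∞} (h : f ≤ᵐ[ν] g) : X.nrmE f ≤ X.nrmE g :=
  X.nrm_mono _ _ <| h.mono fun x hx => by simpa only [abs_coe_ennreal_ereal] using hx

theorem nrmE_add_le (f g : α → ℝ≥0∞) : X.nrmE (f + g) ≤ X.cc * (X.nrmE f + X.nrmE g) := by
  simpa only [nrmE, Pi.add_apply, EReal.coe_ennreal_add] using X.nrm_triangle (f ·) (g ·)

theorem nrmE_const_mul (c : NNReal) (f : α → ℝ≥0∞) :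
    X.nrmE (fun x => c * f x) = c * X.nrmE f := by
  simpa only [nrmE, NNReal.abs_eq, ENNReal.ofReal_coe_nnreal, EReal.coe_ennreal_mul,
    EReal.coe_nnreal_eq_coe_real] using X.nrm_smul c (f ·)

theorem nrmE_tsum_le (f : ℕ → α → ℝ≥0∞) :
    X.nrmE (fun x => ∑' n, f n x) ≤ ∑' n, X.cc ^ (n + 1) * X.nrmE (f n) := by
  simpa only [nrmE, coe_ennreal_ereal_tsum] using
    X.nrm_rieszFischer (fun n x => f n x) fun n => .of_forall fun x => EReal.coe_ennreal_nonneg _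

theorem exists_pos_nrmE_add_le {δ : ℝ≥0∞} (hδ : 0 < δ) :
    ∃ ε > 0, ∀ f g : α → ℝ≥0∞, X.nrmE f ≤ ε → X.nrmE g ≤ ε → X.nrmE (f + g) ≤ δ := by
  have hcc : X.cc ≠ 0 := (zero_lt_one.trans_le X.one_le_cc).ne'
  have hδc : δ / X.cc ≠ 0 := (ENNReal.div_pos hδ.ne' X.cc_lt_top.ne).ne'
  refine ⟨δ / X.cc / 2, ENNReal.half_pos hδc, fun f g hf hg => ?_⟩
  calc X.nrmE (f + g) ≤ X.cc * (X.nrmE f + X.nrmE g) := X.nrmE_add_le f g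
    _ ≤ X.cc * (δ / X.cc / 2 + δ / X.cc / 2) := by gcongr
    _ = δ := by rw [ENNReal.add_halves, ENNReal.mul_div_cancel hcc X.cc_lt_top.ne]

theorem exists_pos_nrmE_tsum_le {δ : ℝ≥0∞} (hδ : 0 < δ) :
    ∃ ε : ℕ → ℝ≥0∞, (∀ n, 0 < ε n) ∧
      ∀ f : ℕ → α → ℝ≥0∞, (∀ n, X.nrmE (f n) ≤ ε n) → X.nrmE (fun x => ∑' n, f n x) ≤ δ := by
  obtain ⟨ε, hε, hsum⟩ := ENNReal.exists_pos_tsum_mul_lt_of_countable hδ.ne'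
    (fun n : ℕ => X.cc ^ (n + 1)) fun n => ENNReal.pow_ne_top X.cc_lt_top.ne
  refine ⟨fun n => ε n, fun n => ENNReal.coe_pos.2 (hε n), fun f hf => ?_⟩
  calc X.nrmE (fun x => ∑' n, f n x) ≤ ∑' n, X.cc ^ (n + 1) * X.nrmE (f n) := X.nrmE_tsum_le f
    _ ≤ ∑' n, X.cc ^ (n + 1) * ε n := by gcongr with n; exact hf n
    _ ≤ δ := hsum.le

theorem ae_lt_top_of_nrmE_lt_top {w : α → ℝ≥0∞} (hw : Measurable w) (hfin : X.nrmE w < ⊤) :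
    ∀ᵐ x ∂ν, w x < ⊤ := by
  set f : α → ℝ≥0∞ := {x | w x = ⊤}.indicator w
  have hfm : Measurable f := hw.indicator (hw (measurableSet_singleton ⊤))
  have hf_fin : X.nrmE f < ⊤ :=
    (X.nrmE_mono (.of_forall (indicator_le_self' fun _ _ => zero_le))).trans_lt hfin
  -- Since `f` only takes the values `0` and `∞`, doubling does not change it.
  have hf_two : (fun x => ((2 : NNReal) : ℝ≥0∞) * f x) = f := by
    funext x
    by_cases hx : w x = ⊤ <;> simp [f, hx]
  have hdouble : X.nrmE f + X.nrmE f = X.nrmE f + 0 := by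
    rw [← two_mul, add_zero, ← ENNReal.coe_ofNat, ← X.nrmE_const_mul, hf_two]
  have hf_zero : X.nrmE f = 0 := (ENNReal.add_right_inj hf_fin.ne).1 hdouble
  filter_upwards [(X.nrm_eq_zero_iff _ hfm.coe_ereal_ennreal).1 hf_zero] with x hx
  refine lt_top_iff_ne_top.2 fun hxt => ?_
  simp [f, hxt] at hx

end Lattice

/-- `f` has absolutely continuous quasi-norm in `X`; membership `f ∈ X` is not part of the
definition. -/
def HasAbsolutelyContinuousNorm (X : QBFL α ν) (f : α → EReal) : Prop :=
  ∀ E : ℕ → Set α, (∀ n, MeasurableSet (E n)) → Antitone E → ν (⋂ n, E n) = 0 →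
    Tendsto (fun n => X.nrm ((E n).indicator f)) atTop (𝓝 0)

section Topology

variable [TopologicalSpace α]

/-- `w` has lower semicontinuous majorants `v` whose excess over `w` has arbitrarily small
quasi-norm. The excess is bounded by a function `g` in place of `v - w`, which avoids subtraction
where `w = ∞`. -/
def LscApproximable (X : QBFL α ν) (w : α → ℝ≥0∞) : Prop :=
  ∀ δ : ℝ≥0∞, 0 < δ → ∃ v g : α → ℝ≥0∞, LowerSemicontinuous v ∧ (∀ x, w x ≤ v x) ∧
    (∀ x, v x ≤ w x + g x) ∧ X.nrmE g ≤ δ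

theorem LscApproximable.tsum {w : ℕ → α → ℝ≥0∞} (h : ∀ n, X.LscApproximable (w n)) :
    X.LscApproximable fun x => ∑' n, w n x := by
  intro δ hδ
  obtain ⟨ε, hε, hsum⟩ := X.exists_pos_nrmE_tsum_le hδ
  choose v g hv hwv hvg hg using fun n => h n (ε n) (hε n)
  refine ⟨fun x => ∑' n, v n x, fun x => ∑' n, g n x, lowerSemicontinuous_tsum hv,
    fun x => ENNReal.tsum_le_tsum fun n => hwv n x, fun x => ?_, hsum g hg⟩
  rw [← ENNReal.tsum_add]
  exact ENNReal.tsum_le_tsum fun n => hvg n x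

theorem LscApproximable.add {w₁ w₂ : α → ℝ≥0∞} (h₁ : X.LscApproximable w₁)
    (h₂ : X.LscApproximable w₂) : X.LscApproximable (w₁ + w₂) := by
  intro δ hδ
  obtain ⟨ε, hε, hsum⟩ := X.exists_pos_nrmE_add_le hδ
  obtain ⟨v₁, g₁, hv₁, hwv₁, hvg₁, hg₁⟩ := h₁ ε hε
  obtain ⟨v₂, g₂, hv₂, hwv₂, hvg₂, hg₂⟩ := h₂ ε hε
  exact ⟨v₁ + v₂, g₁ + g₂, hv₁.add hv₂, fun x => add_le_add (hwv₁ x) (hwv₂ x),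
    fun x => (add_le_add (hvg₁ x) (hvg₂ x)).trans_eq (add_add_add_comm _ _ _ _),
    hsum g₁ g₂ hg₁ hg₂⟩

theorem LscApproximable.iInf_nrm_le {w : α → ℝ≥0∞} (h : X.LscApproximable w)
    (hfin : ∀ᵐ x ∂ν, w x < ⊤) :
    ⨅ v ∈ {v : α → EReal | (∀ x, (w x : EReal) ≤ v x) ∧ LowerSemicontinuous v}, X.nrm v
      ≤ X.nrmE w := by
  choose v g hv hwv hvg hg using fun n : ℕ => h (n : ℝ≥0∞)⁻¹ (by simp)
  have hdiff (n : ℕ) : X.nrm (fun x => (v n x : EReal) - w x) ≤ (n : ℝ≥0∞)⁻¹ := by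
    refine (X.nrm_mono _ (fun x => (g n x : EReal)) ?_).trans (hg n)
    filter_upwards [hfin] with x hx
    rw [← ENNReal.toEReal_sub hx.ne (hwv n x), abs_coe_ennreal_ereal, abs_coe_ennreal_ereal]
    exact tsub_le_iff_left.2 (hvg n x)
  have hlim : Tendsto (fun n => X.nrm fun x => (v n x : EReal)) atTop (𝓝 (X.nrmE w)) :=
    X.nrm_continuous _ _ (tendsto_of_tendsto_of_tendsto_of_le_of_le tendsto_const_nhds
      ENNReal.tendsto_inv_nat_nhds_zero (fun _ => zero_le) hdiff)
  refine ge_of_tendsto' hlim fun n => iInf₂_le _ ⟨fun x => ?_, ?_⟩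
  · exact EReal.coe_ennreal_le_coe_ennreal_iff.2 (hwv n x)
  · exact continuous_coe_ennreal_ereal.comp_lowerSemicontinuous (hv n)
      EReal.coe_ennreal_strictMono.monotone

variable [OpensMeasurableSpace α] [ν.OuterRegular]

theorem HasAbsolutelyContinuousNorm.exists_isOpen_nrmE_sdiff_le {U A : Set α}
    (hU : X.HasAbsolutelyContinuousNorm (U.indicator 1)) (hUo : IsOpen U) (hA : MeasurableSet A)
    (hνA : ν A ≠ ⊤) (hAU : A ⊆ U) {δ : ℝ≥0∞} (hδ : 0 < δ) :
    ∃ V : Set α, IsOpen V ∧ A ⊆ V ∧ X.nrmE ((V \ A).indicator 1) ≤ δ := by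
  obtain ⟨V, hV_anti, hVo, hAV, hV_null⟩ :=
    exists_antitone_isOpen_measure_iInter_sdiff_eq_zero hA hνA
  have hlim := hU (fun n => V n \ A) (fun n => (hVo n).measurableSet.diff hA)
    (fun m n hmn => sdiff_subset_sdiff_left (hV_anti hmn)) hV_null
  obtain ⟨n, hn⟩ := (hlim.eventually_lt_const hδ).exists
  refine ⟨V n ∩ U, (hVo n).inter hUo, subset_inter (hAV n) hAU, ?_⟩
  rw [nrmE_indicator_one, inter_sdiff_right_comm, ← indicator_indicator]
  exact hn.le

theorem exists_isOpen_nrmE_sdiff_le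
    (S : ν.FiniteSpanningSetsIn {U | IsOpen U ∧ X.HasAbsolutelyContinuousNorm (U.indicator 1)})
    {A : Set α} (hA : MeasurableSet A) {δ : ℝ≥0∞} (hδ : 0 < δ) :
    ∃ V : Set α, IsOpen V ∧ A ⊆ V ∧ X.nrmE ((V \ A).indicator 1) ≤ δ := by
  obtain ⟨ε, hε, hsum⟩ := X.exists_pos_nrmE_tsum_le hδ
  choose V hVo hAV hV using fun n => (S.set_mem n).2.exists_isOpen_nrmE_sdiff_le (S.set_mem n).1
    (hA.inter (S.set_mem n).1.measurableSet)
    (measure_inter_lt_top_of_right_ne_top (S.finite n).ne).ne inter_subset_right (hε n)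
  refine ⟨⋃ n, V n, isOpen_iUnion hVo, ?_, (X.nrmE_mono (.of_forall ?_)).trans (hsum _ hV)⟩
  · calc A = ⋃ n, A ∩ S.set n := by rw [← inter_iUnion, S.spanning, inter_univ]
      _ ⊆ ⋃ n, V n := iUnion_mono hAV
  · refine indicator_le fun x hx => ?_
    obtain ⟨n, hxV⟩ := mem_iUnion.1 hx.1
    have hxn : x ∈ V n \ (A ∩ S.set n) := ⟨hxV, fun h => hx.2 h.1⟩
    calc (1 : α → ℝ≥0∞) x = (V n \ (A ∩ S.set n)).indicator 1 x := (indicator_of_mem hxn 1).symm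
      _ ≤ ∑' n, (V n \ (A ∩ S.set n)).indicator 1 x := ENNReal.le_tsum n

theorem lscApproximable_indicator_const
    (S : ν.FiniteSpanningSetsIn {U | IsOpen U ∧ X.HasAbsolutelyContinuousNorm (U.indicator 1)})
    {A : Set α} (hA : MeasurableSet A) (c : NNReal) :
    X.LscApproximable (A.indicator fun _ => (c : ℝ≥0∞)) := by
  intro δ hδ
  -- The tolerance `δ / c` is `∞` when `c = 0`.
  obtain ⟨V, hVo, hAV, hV⟩ :=
    exists_isOpen_nrmE_sdiff_le S hA (ENNReal.div_pos hδ.ne' (ENNReal.coe_ne_top (r := c)))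
  refine ⟨V.indicator fun _ => (c : ℝ≥0∞), fun x => c * (V \ A).indicator 1 x,
    hVo.lowerSemicontinuous_indicator zero_le,
    fun x => indicator_le_indicator_of_subset hAV (fun _ => zero_le) x, fun x => ?_, ?_⟩
  · by_cases hxV : x ∈ V <;> by_cases hxA : x ∈ A <;> simp [hxV, hxA]
  · calc X.nrmE (fun x => c * (V \ A).indicator 1 x) = c * X.nrmE ((V \ A).indicator 1) :=
          X.nrmE_const_mul c _
      _ ≤ c * (δ / c) := by gcongr
      _ ≤ δ := ENNReal.mul_div_le

theorem lscApproximable_simpleFunc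
    (S : ν.FiniteSpanningSetsIn {U | IsOpen U ∧ X.HasAbsolutelyContinuousNorm (U.indicator 1)})
    (f : SimpleFunc α NNReal) : X.LscApproximable fun x => (f x : ℝ≥0∞) := by
  induction f using SimpleFunc.induction with
  | @const c A hA =>
    convert lscApproximable_indicator_const S hA c using 2 with x
    by_cases hx : x ∈ A <;> simp [hx]
  | add _ hf hg =>
    simpa only [SimpleFunc.coe_add, Pi.add_apply, ENNReal.coe_add, Pi.add_def] using hf.add hg

theorem lscApproximable_of_measurable
    (S : ν.FiniteSpanningSetsIn {U | IsOpen U ∧ X.HasAbsolutelyContinuousNorm (U.indicator 1)})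
    {w : α → ℝ≥0∞} (hw : Measurable w) : X.LscApproximable w := by
  simpa only [SimpleFunc.tsum_eapproxDiff w hw] using
    LscApproximable.tsum fun n => lscApproximable_simpleFunc S (SimpleFunc.eapproxDiff w n)

end Topology

end QBFL

theorem vitali_caratheodory_general {α : Type*} [TopologicalSpace α] [MeasurableSpace α]
    [OpensMeasurableSpace α] {ν : Measure α} [ν.OuterRegular] {X : QBFL α ν}
    (S : ν.FiniteSpanningSetsIn {U | IsOpen U ∧ X.HasAbsolutelyContinuousNorm (U.indicator 1)})
    {u : α → EReal} (hu : Measurable u) :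
    X.nrm u =
      ⨅ v ∈ {v : α → EReal | (∀ x, ((u x).abs : EReal) ≤ v x) ∧ LowerSemicontinuous v},
        X.nrm v := by
  refine le_antisymm (le_iInf₂ fun v hv => X.nrm_le_of_coe_abs_le (.of_forall hv.1)) ?_
  rcases eq_top_or_lt_top (X.nrm u) with htop | hfin
  · exact htop ▸ le_top
  · have hw : Measurable fun x => (u x).abs := measurable_ereal_abs.comp hu
    rw [← X.nrmE_abs u] at hfin ⊢
    exact (QBFL.lscApproximable_of_measurable S hw).iInf_nrm_le
      (X.ae_lt_top_of_nrmE_lt_top hw hfin)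

/-- Vitali–Carathéodory theorem. If `χ_B ∈ X` and `χ_B` has absolutely
continuous quasi-norm in `X` for every bounded set `B ⊆ P`, then the quasi-norm of any
measurable function `u` equals the infimum of the quasi-norms of its lower semicontinuous
majorants. -/
theorem vitali_caratheodory
    {P : Type*} [MetricSpace P] [MeasurableSpace P] [BorelSpace P]
    (μ : MeasureTheory.Measure P) [SigmaFinite μ]
    (hball : ∀ (x : P) (r : ℝ), 0 < r → 0 < μ (Metric.ball x r) ∧ μ (Metric.ball x r) < ⊤)
    (X : QBFL P μ)
    (hX : ∀ B : Set P, Bornology.IsBounded B →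
      X.nrm (B.indicator 1) < ⊤ ∧
      ∀ E : ℕ → Set P, (∀ n, MeasurableSet (E n)) → Antitone E → μ (⋂ n, E n) = 0 →
        Tendsto (fun n => X.nrm ((E n).indicator (B.indicator 1))) atTop (𝓝 0))
    (u : P → EReal) (hu : Measurable u) :
    X.nrm u =
      ⨅ v ∈ {v : P → EReal | (∀ x, ((u x).abs : EReal) ≤ v x) ∧ LowerSemicontinuous v},
        X.nrm v := by
  have hfin (x : P) (r : ℝ) (hr : 0 < r) : μ (ball x r) < ⊤ := (hball x r hr).2
  have := outerRegular_of_measure_ball_lt_top hfin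
  obtain ⟨S⟩ := nonempty_finiteSpanningSetsIn_isOpen_isBounded hfin
  exact vitali_caratheodory_general (S.mono fun U hU => ⟨hU.1, (hX U hU.2).2⟩) hu

end
end

section
/- Let G ⊆ P be open and let E ⊆ P satisfy μ(E) = 0. Then C_X(G) = C_X(G ∖ E), and likewise C̃_{X,r}(G) = C̃_{X,r}(G ∖ E) when ‖·‖_X is an r-norm. -/
/-!
Capacities are monotone, so only `C(G) ≤ C(G \ E)` is at stake. Given `u ≥ 1` on `G \ E` with upper
gradient `g`, raise `u` to at least `1` on all of `G` and add `∞` to `g` on a measurable null set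
`N ⊇ E`. Both functions change only on null sets, so their quasi-norms stay the same.

The new function still has the new upper gradient. Along a curve on which the integral of
`g + ∞ · 1_N` is finite, the times spent outside `N` accumulate at the starting time. If the curve
starts in the open set `G`, then `u ≥ 1` at such times; since the integral of `g` over short initial
pieces tends to zero, `u ≥ 1` at the starting point as well, so `u` was not changed there. Reversing
the curve gives the same at its other end.
-/

open MeasureTheory Filter Set Topology Metric ENNReal

noncomputable section

variable {P : Type*}

variable [MetricSpace P] [MeasurableSpace P] {μ : MeasureTheory.Measure P}

/-- The Sobolev capacity `C̃_{X,r}`. -/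
def QBFL.capR (X : QBFL P μ) (r : ℝ) (E : Set P) : ℝ≥0∞ :=
  ⨅ q ∈ {q : (P → EReal) × (P → ℝ≥0∞) |
      Measurable q.1 ∧ (∀ x ∈ E, 1 ≤ q.1 x) ∧ IsUpperGradient q.1 q.2},
    (X.nrm q.1 ^ r + X.nrmE q.2 ^ r) ^ (1 / r)

/-- `‖·‖_X` is an `r`-norm. -/
def QBFL.IsRNorm (X : QBFL P μ) (r : ℝ) : Prop :=
  ∀ u v : P → EReal, X.nrm (fun x => u x + v x) ^ r ≤ X.nrm u ^ r + X.nrm v ^ r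

section Curves

variable {Q : Type*} [PseudoMetricSpace Q]

/-- The initial piece of a curve, over the parameter interval `[0, t]`. -/
def Curve.initial (γ : Curve Q) (t : ℝ) (ht : 0 < t) (htγ : t ≤ γ.len) : Curve Q where
  len := t
  len_pos := ht
  toFun := γ.toFun
  lip := γ.lip.mono (Icc_subset_Icc_right htγ)

/-- The curve run backwards, which exchanges the two endpoints. -/
def Curve.reverse (γ : Curve Q) : Curve Q where
  len := γ.len
  len_pos := γ.len_pos
  toFun t := γ.toFun (γ.len - t)
  lip s hs t ht := by
    have h := γ.lip (x := γ.len - s) ⟨sub_nonneg.2 hs.2, sub_le_self _ hs.1⟩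
      (y := γ.len - t) ⟨sub_nonneg.2 ht.2, sub_le_self _ ht.1⟩
    rwa [edist_sub_left] at h

lemma Curve.tendsto_start (γ : Curve Q) : Tendsto γ.toFun (𝓝[>] 0) (𝓝 (γ.toFun 0)) := by
  have h : Tendsto γ.toFun (𝓝[Icc 0 γ.len] 0) (𝓝 (γ.toFun 0)) :=
    γ.lip.continuousOn 0 (left_mem_Icc.2 γ.len_pos.le)
  exact h.mono_left (nhdsWithin_le_of_mem (Icc_mem_nhdsGT γ.len_pos))

lemma curveLint_mono (γ : Curve Q) {ρ σ : Q → ℝ≥0∞} (h : ρ ≤ σ) :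
    curveLint γ ρ ≤ curveLint γ σ :=
  lintegral_mono fun t => h (γ.toFun t)

lemma curveLint_reverse (γ : Curve Q) (ρ : Q → ℝ≥0∞) :
    curveLint γ.reverse ρ = curveLint γ ρ := by
  have h := (Measure.measurePreserving_sub_left (volume : Measure ℝ)
    γ.len).setLIntegral_comp_preimage_emb (MeasurableEquiv.subLeft γ.len).measurableEmbedding
    (fun t => ρ (γ.toFun t)) (Icc 0 γ.len)
  rwa [preimage_const_sub_Icc, sub_self, sub_zero] at h

lemma tendsto_setLIntegral_start_zero {γ : Curve Q} {ρ : Q → ℝ≥0∞} (h : curveLint γ ρ ≠ ⊤) :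
    Tendsto (fun t => ∫⁻ s in Icc 0 t, ρ (γ.toFun s)) (𝓝[>] 0) (𝓝 0) := by
  have hvol : Tendsto (fun t => volume.restrict (Icc 0 γ.len) (Icc 0 t)) (𝓝[>] 0) (𝓝 0) := by
    have hofReal : Tendsto ENNReal.ofReal (𝓝[>] 0) (𝓝 0) :=
      (ENNReal.continuous_ofReal.tendsto' 0 0 ENNReal.ofReal_zero).mono_left nhdsWithin_le_nhds
    exact tendsto_of_tendsto_of_tendsto_of_le_of_le tendsto_const_nhds hofReal
      (fun t => zero_le) fun t => (Measure.restrict_apply_le _ _).trans (by simp)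
  refine (tendsto_setLIntegral_zero h hvol).congr' ?_
  filter_upwards [Ioc_mem_nhdsGT γ.len_pos] with t ht
  rw [Measure.restrict_restrict_of_subset (Icc_subset_Icc_right ht.2)]

lemma frequently_ne_top_of_curveLint_ne_top {γ : Curve Q} {ρ : Q → ℝ≥0∞}
    (h : curveLint γ ρ ≠ ⊤) : ∃ᶠ t in 𝓝[>] 0, ρ (γ.toFun t) ≠ ⊤ := by
  intro htop
  simp only [not_not] at htop
  obtain ⟨ε, hε, hεtop⟩ := mem_nhdsGT_iff_exists_Ioo_subset.1
    (inter_mem htop (Ioo_mem_nhdsGT γ.len_pos))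
  refine h (top_le_iff.1 ?_)
  calc (⊤ : ℝ≥0∞) = ∫⁻ _ in Ioo 0 ε, ⊤ := by
        rw [setLIntegral_const, Real.volume_Ioo, sub_zero,
          ENNReal.top_mul (ENNReal.ofReal_pos.2 hε).ne']
    _ = ∫⁻ t in Ioo 0 ε, ρ (γ.toFun t) :=
        setLIntegral_congr_fun measurableSet_Ioo fun t ht => (hεtop ht).1.symm
    _ ≤ curveLint γ ρ :=
        lintegral_mono_set fun t ht => Ioo_subset_Icc_self (hεtop ht).2

end Curves

lemma ereal_le_add_of_abs_sub_le {a b : EReal} {r : ℝ≥0∞} (h : (a - b).abs ≤ r) (hr : r ≠ ⊤) :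
    b ≤ a + r := by
  lift r to NNReal using hr
  induction a with
  | bot => simp at h
  | top => simp
  | coe a =>
    induction b with
    | bot => exact bot_le
    | top => simp at h
    | coe b =>
      rw [← EReal.coe_sub, EReal.abs_def, ENNReal.ofReal_le_coe, abs_sub_comm] at h
      have hba : b - a ≤ r := (le_abs_self _).trans h
      rw [EReal.coe_nnreal_eq_coe_real]
      exact_mod_cast sub_le_iff_le_add'.1 hba

section UpperGradients

variable {Q : Type*} [PseudoMetricSpace Q] [MeasurableSpace Q] {u v : Q → EReal}
  {g ρ : Q → ℝ≥0∞} {c : EReal} {G N : Set Q}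

lemma IsUpperGradient.abs_sub_le_setLIntegral (hg : IsUpperGradient u g) (γ : Curve Q) {t : ℝ}
    (ht : 0 < t) (htγ : t ≤ γ.len) :
    (u (γ.toFun 0) - u (γ.toFun t)).abs ≤ ∫⁻ s in Icc 0 t, g (γ.toFun s) :=
  hg.2 (γ.initial t ht htγ)

lemma IsUpperGradient.le_start_of_frequently (hg : IsUpperGradient u g) {γ : Curve Q}
    (hγ : curveLint γ g ≠ ⊤) (hc : ∃ᶠ t in 𝓝[>] 0, c ≤ u (γ.toFun t)) : c ≤ u (γ.toFun 0) := by
  have hlim := tendsto_setLIntegral_start_zero hγ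
  have hsum : Tendsto (fun t => u (γ.toFun 0) + (∫⁻ s in Icc 0 t, g (γ.toFun s) : ℝ≥0∞))
      (𝓝[>] 0) (𝓝 (u (γ.toFun 0))) := by
    have hadd := EReal.continuousAt_add (p := (u (γ.toFun 0), 0)) (by simp) (by simp)
    have h0 := (continuous_coe_ennreal_ereal.tendsto 0).comp hlim
    simpa [Function.comp_def] using hadd.tendsto.comp (tendsto_const_nhds.prodMk_nhds h0)
  refine ge_of_tendsto_of_frequently hsum ((hc.and_eventually
    ((hlim.eventually_ne ENNReal.zero_ne_top).and (Ioc_mem_nhdsGT γ.len_pos))).mono ?_)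
  rintro t ⟨hct, hfin, ht, htγ⟩
  exact hct.trans (ereal_le_add_of_abs_sub_le (hg.abs_sub_le_setLIntegral γ ht htγ) hfin)

lemma IsUpperGradient.le_start_of_isOpen (hg : IsUpperGradient u g) (hG : IsOpen G)
    (hu : ∀ x ∈ G \ N, c ≤ u x) {γ : Curve Q} (hγ : curveLint γ (g + N.indicator ⊤) ≠ ⊤)
    (h0 : γ.toFun 0 ∈ G) : c ≤ u (γ.toFun 0) := by
  have hN : ∃ᶠ t in 𝓝[>] 0, γ.toFun t ∉ N :=
    (frequently_ne_top_of_curveLint_ne_top hγ).mono fun t ht hmem => ht (by simp [hmem])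
  have hγG : ∀ᶠ t in 𝓝[>] 0, γ.toFun t ∈ G := γ.tendsto_start.eventually (hG.mem_nhds h0)
  have hγg : curveLint γ g ≠ ⊤ := ne_top_of_le_ne_top hγ (curveLint_mono γ le_self_add)
  exact hg.le_start_of_frequently hγg
    ((hN.and_eventually hγG).mono fun t ht => hu _ ⟨ht.2, ht.1⟩)

lemma IsUpperGradient.of_eq_start (hg : IsUpperGradient u g) (hρ : Measurable ρ) (hgρ : g ≤ ρ)
    (hv : ∀ γ : Curve Q, curveLint γ ρ ≠ ⊤ → v (γ.toFun 0) = u (γ.toFun 0)) :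
    IsUpperGradient v ρ := by
  refine ⟨hρ, fun γ => ?_⟩
  rcases eq_or_ne (curveLint γ ρ) ⊤ with hγ | hγ
  · exact hγ ▸ le_top
  · have hend : v (γ.toFun γ.len) = u (γ.toFun γ.len) := by
      simpa [Curve.reverse] using hv γ.reverse (by rwa [curveLint_reverse])
    rw [hv γ hγ, hend]
    exact (hg.2 γ).trans (curveLint_mono γ hgρ)

end UpperGradients

open Classical in
/-- The function `u` raised to at least `c` on `G`. It turns a function that is at least `c` on
`G \ E` into one that is at least `c` on `G`. -/
def raiseOn {α : Type*} (G : Set α) (c : EReal) (u : α → EReal) : α → EReal :=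
  G.piecewise (fun x => max (u x) c) u

section RaiseOn

variable {α : Type*} {G E : Set α} {c : EReal} {u : α → EReal}

lemma le_raiseOn (u : α → EReal) {x : α} (hx : x ∈ G) : c ≤ raiseOn G c u x := by
  simp [raiseOn, hx]

lemma raiseOn_apply_eq_self {x : α} (h : x ∈ G → c ≤ u x) : raiseOn G c u x = u x := by
  by_cases hx : x ∈ G
  · simp [raiseOn, hx, h hx]
  · simp [raiseOn, hx]

variable [MeasurableSpace α]

lemma measurable_raiseOn (hG : MeasurableSet G) (hu : Measurable u) :
    Measurable (raiseOn G c u) :=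
  (hu.max measurable_const).piecewise hG hu

lemma raiseOn_ae_eq_self {ν : Measure α} (hE : ν E = 0) (hu : ∀ x ∈ G \ E, c ≤ u x) :
    raiseOn G c u =ᵐ[ν] u := by
  filter_upwards [measure_eq_zero_iff_ae_notMem.1 hE] with x hx
  exact raiseOn_apply_eq_self fun hxG => hu x ⟨hxG, hx⟩

lemma IsUpperGradient.exists_raiseOn [PseudoMetricSpace α] {ν : Measure α} {g : α → ℝ≥0∞}
    (hg : IsUpperGradient u g) (hG : IsOpen G) (hE : ν E = 0) (hu : ∀ x ∈ G \ E, c ≤ u x) :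
    ∃ ρ, IsUpperGradient (raiseOn G c u) ρ ∧ ρ =ᵐ[ν] g := by
  set N := toMeasurable ν E
  have hu' : ∀ x ∈ G \ N, c ≤ u x := fun x hx =>
    hu x (sdiff_subset_sdiff_right (subset_toMeasurable ν E) hx)
  have hmeas : Measurable (g + N.indicator ⊤) :=
    hg.1.add (measurable_const.indicator (measurableSet_toMeasurable ν E))
  refine ⟨g + N.indicator ⊤, hg.of_eq_start hmeas le_self_add fun γ hγ =>
    raiseOn_apply_eq_self (hg.le_start_of_isOpen hG hu' hγ), ?_⟩
  have hN : ν N = 0 := (measure_toMeasurable E).trans hE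
  filter_upwards [measure_eq_zero_iff_ae_notMem.1 hN] with x hx
  simp [hx]

end RaiseOn

section Norm

variable {α : Type*} [MeasurableSpace α] {ν : Measure α} (X : QBFL α ν)

lemma QBFL.nrm_congr {u v : α → EReal} (h : u =ᵐ[ν] v) : X.nrm u = X.nrm v :=
  le_antisymm (X.nrm_mono u v (h.mono fun _ hx => by rw [hx]))
    (X.nrm_mono v u (h.mono fun _ hx => by rw [hx]))

lemma QBFL.nrmE_congr {g ρ : α → ℝ≥0∞} (h : g =ᵐ[ν] ρ) : X.nrmE g = X.nrmE ρ :=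
  X.nrm_congr (h.fun_comp fun a : ℝ≥0∞ => (a : EReal))

end Norm

lemma QBFL.cap_mono (X : QBFL P μ) {A B : Set P} (h : A ⊆ B) : X.cap A ≤ X.cap B :=
  biInf_mono fun _ hu => ⟨hu.1, fun x hx => hu.2 x (h hx)⟩

lemma QBFL.capR_mono (X : QBFL P μ) (r : ℝ) {A B : Set P} (h : A ⊆ B) :
    X.capR r A ≤ X.capR r B :=
  biInf_mono fun _ hq => ⟨hq.1, fun x hx => hq.2.1 x (h hx), hq.2.2⟩

section Capacity

variable {G E : Set P}

lemma QBFL.newt_raiseOn_le (X : QBFL P μ) (hG : IsOpen G) (hE : μ E = 0) {c : EReal}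
    {u : P → EReal} (hu : ∀ x ∈ G \ E, c ≤ u x) : X.newt (raiseOn G c u) ≤ X.newt u := by
  refine add_le_add (X.nrm_congr (raiseOn_ae_eq_self hE hu)).le (le_iInf₂ fun g hg => ?_)
  obtain ⟨ρ, hρ, hρg⟩ := IsUpperGradient.exists_raiseOn hg hG hE hu
  exact (iInf₂_le ρ hρ).trans (X.nrmE_congr hρg).le

variable [OpensMeasurableSpace P]

lemma QBFL.cap_le_cap_diff_null (X : QBFL P μ) (hG : IsOpen G) (hE : μ E = 0) :
    X.cap G ≤ X.cap (G \ E) := by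
  refine le_iInf₂ fun u ⟨⟨hum, hufin⟩, hu⟩ => ?_
  have hle := X.newt_raiseOn_le hG hE hu
  exact (iInf₂_le (raiseOn G 1 u) ⟨⟨measurable_raiseOn hG.measurableSet hum, hle.trans_lt hufin⟩,
    fun _ hx => le_raiseOn u hx⟩).trans hle

lemma QBFL.capR_le_capR_diff_null (X : QBFL P μ) (r : ℝ) (hG : IsOpen G) (hE : μ E = 0) :
    X.capR r G ≤ X.capR r (G \ E) := by
  refine le_iInf₂ fun ⟨u, g⟩ ⟨hum, hu, hg⟩ => ?_
  obtain ⟨ρ, hρ, hρg⟩ := IsUpperGradient.exists_raiseOn hg hG hE hu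
  refine (iInf₂_le (raiseOn G 1 u, ρ) ⟨measurable_raiseOn hG.measurableSet hum,
    fun _ hx => le_raiseOn u hx, hρ⟩).trans_eq ?_
  rw [X.nrm_congr (raiseOn_ae_eq_self hE hu), X.nrmE_congr hρg]

end Capacity

theorem cap_open_diff_null_general
    {P : Type*} [MetricSpace P] [MeasurableSpace P] [OpensMeasurableSpace P] {μ : Measure P}
    (X : QBFL P μ) {G E : Set P} (hG : IsOpen G) (hE : μ E = 0) :
    X.cap G = X.cap (G \ E) ∧ ∀ r : ℝ, r ≠ 0 → X.capR r G = X.capR r (G \ E) :=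
  ⟨(X.cap_le_cap_diff_null hG hE).antisymm (X.cap_mono sdiff_subset),
    fun r _ => (X.capR_le_capR_diff_null r hG hE).antisymm (X.capR_mono r sdiff_subset)⟩

/-- Removing a set of measure zero from an open set does not change its
Sobolev capacity. -/
theorem cap_open_diff_null
    {P : Type*} [MetricSpace P] [MeasurableSpace P] [BorelSpace P]
    (μ : MeasureTheory.Measure P) [SigmaFinite μ]
    (hball : ∀ (x : P) (r : ℝ), 0 < r → 0 < μ (Metric.ball x r) ∧ μ (Metric.ball x r) < ⊤)
    (X : QBFL P μ) (G E : Set P) (hG : IsOpen G) (hE : μ E = 0) :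
    X.cap G = X.cap (G \ E) ∧
      ∀ r : ℝ, 0 < r → r ≤ 1 → X.IsRNorm r → X.capR r G = X.capR r (G \ E) := by
  obtain ⟨hcap, hcapR⟩ := cap_open_diff_null_general X hG hE
  exact ⟨hcap, fun r hr _ _ => hcapR r hr.ne'⟩

end
end
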